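/- For all real numbers a, b with 1 < a ≤ b, one has ∫_a^b dt/(√t · (log t)²) = (1/2) ∫_{√a}^{√b} du/log u + √a/log a − √b/log b. -/

import Mathlib

theorem stmt_3 (a b : ℝ) (ha : 1 < a) (hab : a ≤ b) :
    ∫ t in a..b, 1 / (Real.sqrt t * (Real.log t) ^ 2) =
      (1/2) * (∫ u in Real.sqrt a..Real.sqrt b, 1 / Real.log u)
        + Real.sqrt a / Real.log a - Real.sqrt b / Real.log b := by
  have hx1 : ∀ x ∈ Set.uIcc a b, 1 < x := by
    intro x hx
    rw [Set.uIcc_of_le hab] at hx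
    exact lt_of_lt_of_le ha hx.1
  have hs : ∀ x ∈ Set.uIcc a b, Real.sqrt x ≠ 0 := fun x hx =>
    (Real.sqrt_pos.2 (by linarith [hx1 x hx])).ne'
  have hl : ∀ x ∈ Set.uIcc a b, Real.log x ≠ 0 := fun x hx =>
    (Real.log_pos (hx1 x hx)).ne'
  have hx0 : ∀ x ∈ Set.uIcc a b, x ≠ 0 := fun x hx => by linarith [hx1 x hx]
  have clog : ContinuousOn Real.log (Set.uIcc a b) :=
    Real.continuousOn_log.mono (fun x hx => hx0 x hx)
  have csq : ContinuousOn Real.sqrt (Set.uIcc a b) := Real.continuous_sqrt.continuousOn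
  have c1 : ContinuousOn (fun x => 1 / (2 * Real.sqrt x)) (Set.uIcc a b) :=
    continuousOn_const.div (continuousOn_const.mul csq)
      (fun x hx => mul_ne_zero two_ne_zero (hs x hx))
  have hsub := intervalIntegral.integral_comp_mul_deriv' (a := a) (b := b)
    (f := Real.sqrt) (f' := fun x => 1 / (2 * Real.sqrt x)) (g := fun u => 1 / Real.log u)
    (fun x hx => Real.hasDerivAt_sqrt (hx0 x hx)) c1 (by
      have hu : ∀ u ∈ Real.sqrt '' Set.uIcc a b, 1 < u := by
        rintro _ ⟨x, hx, rfl⟩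
        exact Real.lt_sqrt_of_sq_lt (by simpa using hx1 x hx)
      refine continuousOn_const.div (Real.continuousOn_log.mono ?_) ?_
      · intro u h
        have := hu u h
        simp only [Set.mem_compl_iff, Set.mem_singleton_iff]
        linarith
      · intro u h
        exact (Real.log_pos (hu u h)).ne')
  have e1 : (∫ x in a..b, ((fun u => 1 / Real.log u) ∘ Real.sqrt) x * (1 / (2 * Real.sqrt x)))
      = ∫ x in a..b, 1 / (Real.sqrt x * Real.log x) := by
    refine intervalIntegral.integral_congr (fun x hx => ?_)
    have h1 := hs x hx
    have h2 := hl x hx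
    simp only [Function.comp]
    rw [Real.log_sqrt (by linarith [hx1 x hx])]
    field_simp
  have i1 : IntervalIntegrable (fun x => (1/2) * (1 / (Real.sqrt x * Real.log x)))
      MeasureTheory.volume a b :=
    (continuousOn_const.mul (continuousOn_const.div (csq.mul clog)
      (fun x hx => mul_ne_zero (hs x hx) (hl x hx)))).intervalIntegrable
  have i2 : IntervalIntegrable (fun x => 1 / (Real.sqrt x * Real.log x ^ 2))
      MeasureTheory.volume a b :=
    (continuousOn_const.div (csq.mul (clog.pow 2))
      (fun x hx => mul_ne_zero (hs x hx) (pow_ne_zero 2 (hl x hx)))).intervalIntegrable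
  have hF := intervalIntegral.integral_eq_sub_of_hasDerivAt (a := a) (b := b)
    (f := fun x => Real.sqrt x / Real.log x)
    (f' := fun x => (1/2) * (1 / (Real.sqrt x * Real.log x)) - 1 / (Real.sqrt x * Real.log x ^ 2))
    (fun x hx => by
      have h1 := hs x hx
      have h2 := hl x hx
      have h0 := hx0 x hx
      have h3 : Real.sqrt x ^ 2 = x := Real.sq_sqrt (by linarith [hx1 x hx])
      refine ((Real.hasDerivAt_sqrt h0).div (Real.hasDerivAt_log h0) h2).congr_deriv ?_
      have h4 : x⁻¹ = (Real.sqrt x ^ 2)⁻¹ := by rw [h3]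
      rw [h4]
      field_simp) (i1.sub i2)
  rw [intervalIntegral.integral_sub i1 i2, intervalIntegral.integral_const_mul, ← e1, hsub] at hF
  linarith
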